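/- Let G be a finite group, N a normal subgroup with Q = G/N abelian, and q ∈ G. Then the class functions √(#[ρ]) · (π_q ⊗ ρ), where ρ ranges over a set of representatives of the Q̂-orbits in R_q, form a basis of the space of class functions on G that vanish outside the coset qN; in particular, the dimension of this space equals both #R_q and the number of conjugacy classes of G contained in qN. -/

import Mathlib

open scoped BigOperators

/-- `ρ : G → ℂ` is the character of an irreducible (simple) finite-dimensional
complex representation of `G`. -/
def IsIrrChar (G : Type) [Group G] (ρ : G → ℂ) : Prop :=
  ∃ V : FDRep ℂ G, CategoryTheory.Simple V ∧ ρ = V.character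

/-- `Θ : G → ℂ` is the character of some finite-dimensional complex representation of `G`. -/
def IsChar (G : Type) [Group G] (Θ : G → ℂ) : Prop :=
  ∃ V : FDRep ℂ G, Θ = V.character

variable {G : Type} [Group G]

/-- The action of a character `χ ∈ Q̂` (where `Q = G ⧸ N`) on a function `ρ : G → ℂ`:
`(χ · ρ)(g) = χ(gN) · ρ(g)`. -/
def charMul (N : Subgroup G) [N.Normal] (χ : (G ⧸ N) →* ℂˣ) (ρ : G → ℂ) : G → ℂ :=
  fun g => (χ (g : G ⧸ N) : ℂ) * ρ g

/-- The orbit of `ρ` under the tensoring action of `Q̂ = Hom(G ⧸ N, ℂˣ)`. -/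
def qhatOrbit (N : Subgroup G) [N.Normal] (ρ : G → ℂ) : Set (G → ℂ) :=
  {ρ' | ∃ χ : (G ⧸ N) →* ℂˣ, ρ' = charMul N χ ρ}

/-- The coset `qN`, as a subset of `G`. -/
def coset (N : Subgroup G) [N.Normal] (q : G) : Set G :=
  {g | (g : G ⧸ N) = (q : G ⧸ N)}

/-- `C_q`: the set of conjugacy classes of `G` contained in the coset `qN`. -/
def Cset (N : Subgroup G) [N.Normal] (q : G) : Set (ConjClasses G) :=
  {c | c.carrier ⊆ coset N q}

/-- `R_q`: the set of `Q̂`-orbits on the irreducible characters of `G`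
containing a character not identically zero on `qN`. -/
def Rset (N : Subgroup G) [N.Normal] (q : G) : Set (Set (G → ℂ)) :=
  {S | (∃ ρ, IsIrrChar G ρ ∧ S = qhatOrbit N ρ) ∧ ∃ ρ' ∈ S, ∃ g ∈ coset N q, ρ' g ≠ 0}

/-- The class function `π_x` for `x ∈ Q = G ⧸ N`:
`π_x(g) = (1/#Q̂) ∑_{χ ∈ Q̂} conj(χ(x)) χ(gN)`. -/
noncomputable def piQ (N : Subgroup G) [N.Normal] (x : G ⧸ N) : G → ℂ :=
  fun g => (Nat.card ((G ⧸ N) →* ℂˣ) : ℂ)⁻¹ *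
    ∑ᶠ χ : (G ⧸ N) →* ℂˣ, (starRingEnd ℂ) (χ x : ℂ) * (χ (g : G ⧸ N) : ℂ)

/-- The space of class functions on `G`, as a submodule of `G → ℂ`. -/
noncomputable def classFunSubmodule (G : Type) [Group G] : Submodule ℂ (G → ℂ) where
  carrier := {f | ∀ g h : G, f (h * g * h⁻¹) = f g}
  add_mem' := by intro a b ha hb g h; simp only [Pi.add_apply, ha g h, hb g h]
  zero_mem' := by intro g h; rfl
  smul_mem' := by intro c f hf g h; simp only [Pi.smul_apply, hf g h]

/-- The space of class functions on `G` vanishing outside the coset `qN`. -/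
noncomputable def cosetClassFun (N : Subgroup G) [N.Normal] (q : G) : Submodule ℂ (G → ℂ) where
  carrier := {f | (∀ g h : G, f (h * g * h⁻¹) = f g) ∧ ∀ g, g ∉ coset N q → f g = 0}
  add_mem' := by
    intro a b ha hb
    exact ⟨fun g h => by simp only [Pi.add_apply, ha.1 g h, hb.1 g h],
      fun g hg => by simp only [Pi.add_apply, ha.2 g hg, hb.2 g hg, add_zero]⟩
  zero_mem' := ⟨fun g h => rfl, fun g hg => rfl⟩
  smul_mem' := by
    intro c f hf
    exact ⟨fun g h => by simp only [Pi.smul_apply, hf.1 g h],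
      fun g hg => by simp only [Pi.smul_apply, hf.2 g hg, smul_zero]⟩

/-!
A class function orthogonal to every irreducible character gives a central element of `ℂ[G]` of
trace zero on every simple module. By Schur's lemma it kills them all, so it vanishes because `ℂ[G]`
is semisimple. Hence the irreducible characters span the class functions. By duality for `Q`, the
function `π_q` is the indicator of `qN`, so the products `π_q ⊗ ρ` span the class functions
supported on `qN`. On `qN` the twist `χ · ρ` is the scalar multiple `χ(q) ρ`, so one `ρ` per orbit
suffices.

For independence, write `π_q ⊗ ρ` as the average over `χ ∈ Q̂` of `conj(χ(q)) (χ · ρ)`. It is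
orthogonal to every irreducible character outside `[ρ]`. If `ρ` is not identically zero on `qN`,
each `χ` fixing `ρ` has `χ(q) = 1`, so its pairing with `ρ` is `#Stab(ρ) / #Q̂ = 1 / #[ρ]`. This is
where the factor `√(#[ρ])` comes from: the functions `√(#[ρ]) · ⟨ρ, -⟩` are then a dual family.
-/

section CentralElements

variable {k A : Type*} [Field k] [IsAlgClosed k] [CharZero k] [Ring A] [Algebra k A] {z : A}

theorem smul_eq_zero_of_mem_center_of_trace_eq_zero {M : Type*} [AddCommGroup M] [Module k M]
    [Module A M] [IsScalarTower k A M] [FiniteDimensional k M] [IsSimpleModule A M]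
    (hz : z ∈ Subalgebra.center k A) (htr : LinearMap.trace k M (Algebra.lsmul k k M z) = 0)
    (m : M) : z • m = 0 := by
  let T : Module.End A M :=
    { toFun := fun m => z • m
      map_add' := smul_add z
      map_smul' := fun a m => by
        simp only [RingHom.id_apply, smul_smul, Subalgebra.mem_center_iff.1 hz a] }
  -- Schur's lemma: `z` acts on `M` by a scalar, which the trace detects in characteristic zero.
  obtain ⟨c, hc⟩ := (IsSimpleModule.algebraMap_end_bijective_of_isAlgClosed (A := A) (V := M) k).2 T
  have hscalar : Algebra.lsmul k k M z = c • (1 : Module.End k M) :=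
    LinearMap.ext fun m => (LinearMap.congr_fun hc m).symm
  have : Nontrivial M := IsSimpleModule.nontrivial A M
  have hc0 : c = 0 := by
    rw [hscalar, map_smul, LinearMap.trace_one, smul_eq_mul] at htr
    exact (mul_eq_zero.1 htr).resolve_right (Nat.cast_ne_zero.2 Module.finrank_pos.ne')
  calc z • m = c • m := LinearMap.congr_fun hscalar m
    _ = 0 := by rw [hc0, zero_smul]

theorem eq_zero_of_mem_center_of_trace_eq_zero [FiniteDimensional k A] [IsSemisimpleRing A]
    (hz : z ∈ Subalgebra.center k A)
    (htr : ∀ I : Submodule A A, IsSimpleModule A I →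
      LinearMap.trace k I (Algebra.lsmul k k I z) = 0) : z = 0 := by
  have hsimples : sSup {I : Submodule A A | IsSimpleModule A I} ≤
      LinearMap.ker (LinearMap.toSpanSingleton A A z) := by
    refine sSup_le fun I (hI : IsSimpleModule A I) x hx => ?_
    have hzx : z * x = 0 := congrArg Subtype.val <|
      smul_eq_zero_of_mem_center_of_trace_eq_zero hz (htr I hI) (⟨x, hx⟩ : I)
    simpa [Subalgebra.mem_center_iff.1 hz x] using hzx
  rw [IsSemisimpleModule.sSup_simples_eq_top] at hsimples
  simpa using hsimples (Submodule.mem_top (x := (1 : A)))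

end CentralElements

section GroupAlgebra

open scoped MonoidAlgebra

theorem sum_single_mem_center {k G : Type*} [CommSemiring k] [Group G] [Fintype G] {f : G → k}
    (hf : ∀ g h, f (h * g * h⁻¹) = f g) :
    ∑ g, MonoidAlgebra.single g (f g) ∈ Subalgebra.center k k[G] := by
  refine Subalgebra.mem_center_iff.2 fun a => ?_
  induction a using MonoidAlgebra.induction_linear with
  | zero => simp
  | add a b ha hb => rw [add_mul, mul_add, ha, hb]
  | single h c =>
    rw [Finset.mul_sum, Finset.sum_mul]
    refine Fintype.sum_equiv (MulAut.conj h).toEquiv _ _ fun g => ?_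
    simp [MonoidAlgebra.single_mul_single, hf, mul_comm c]

theorem isIrreducible_ofModule' {k G M : Type*} [Field k] [Monoid G] [AddCommGroup M] [Module k M]
    [Module k[G] M] [IsScalarTower k k[G] M] [IsSimpleModule k[G] M] :
    (Representation.ofModule' (k := k) (G := G) M).IsIrreducible := by
  let r : Representation k G M := Representation.ofModule' M
  have hr : r.asAlgebraHom = Algebra.lsmul k k M := Equiv.apply_symm_apply _ _
  let e : r.asModule ≃ₗ[k[G]] M :=
    { r.asModuleEquiv with
      map_smul' := fun a m => LinearMap.congr_fun (DFunLike.congr_fun hr a) (r.asModuleEquiv m) }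
  exact (Representation.irreducible_iff_isSimpleModule_asModule r).2 (IsSimpleModule.congr e)

end GroupAlgebra

section Characters

open CategoryTheory MonoidalCategory

universe u

/-- The pairing `⟨f, h⟩ = (1/#G) ∑ g, f g * h g⁻¹` of functions on a finite group. On complex
characters it is the usual Hermitian inner product, but it is bilinear and makes sense over any
field. -/
noncomputable def charInner (k : Type*) {G : Type*} [Field k] [Group G] [Fintype G] :
    LinearMap.BilinForm k (G → k) :=
  (Nat.card G : k)⁻¹ • (dotProductBilin k k).compl₂ (LinearMap.funLeft k k (·⁻¹))

theorem charInner_apply {k G : Type*} [Field k] [Group G] [Fintype G] (f h : G → k) :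
    charInner k f h = (Nat.card G : k)⁻¹ * ∑ g, f g * h g⁻¹ := rfl

/-- The one-dimensional representation on which the group acts through `φ`. -/
noncomputable def repOfUnitsHom {k G : Type u} [Field k] [Group G] (φ : G →* kˣ) : FDRep k G :=
  FDRep.of ((Algebra.lmul k k).toMonoidHom.comp ((Units.coeHom k).comp φ))

theorem character_repOfUnitsHom {k G : Type u} [Field k] [Group G] (φ : G →* kˣ) (g : G) :
    (repOfUnitsHom φ).character g = φ g :=
  Algebra.trace_self_apply (φ g : k)

variable {k G : Type u} [Field k] [IsAlgClosed k] [CharZero k] [Group G]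

theorem simple_of_isIrreducible [Finite G] {V : Type u} [AddCommGroup V] [Module k V]
    [FiniteDimensional k V] (r : Representation k G V) [r.IsIrreducible] :
    Simple (FDRep.of r) := by
  have := Fintype.ofFinite G
  have := invertibleOfNonzero (NeZero.ne (Nat.card G : k))
  have hnorm := Representation.char_orthonormal r r
  rw [if_pos ⟨Representation.Equiv.refl r⟩, inv_mul_eq_one₀ (NeZero.ne _)] at hnorm
  exact (FDRep.simple_iff_char_is_norm_one _).2 hnorm.symm

theorem eq_zero_of_forall_simple_charInner_eq_zero [Fintype G] {f : G → k}
    (hf : ∀ g h, f (h * g * h⁻¹) = f g)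
    (horth : ∀ V : FDRep k G, Simple V → charInner k V.character f = 0) : f = 0 := by
  classical
  have hf_inv (g h : G) : f (h * g * h⁻¹)⁻¹ = f g⁻¹ := by rw [conj_inv, hf]
  have hz : ∑ g, MonoidAlgebra.single g (f g⁻¹) = 0 := by
    refine eq_zero_of_mem_center_of_trace_eq_zero (sum_single_mem_center hf_inv) fun I hI => ?_
    have := isIrreducible_ofModule' (k := k) (G := G) (M := I)
    have hI := horth _ (simple_of_isIrreducible (Representation.ofModule' I))
    rw [charInner_apply, mul_eq_zero_iff_left (inv_ne_zero (NeZero.ne _))] at hI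
    rw [← hI, map_sum, map_sum]
    refine Finset.sum_congr rfl fun g _ => ?_
    have hsingle : MonoidAlgebra.single g (f g⁻¹) = f g⁻¹ • MonoidAlgebra.of k G g := by simp
    rw [hsingle, map_smul, map_smul, smul_eq_mul, mul_comm]
    rfl
  funext g
  simpa [Finsupp.single_apply] using congrArg (fun z => z.coeff g⁻¹) hz

theorem simple_repOfUnitsHom_tensor [Finite G] (φ : G →* kˣ) (V : FDRep k G) [hV : Simple V] :
    Simple (repOfUnitsHom φ ⊗ V) := by
  have := Fintype.ofFinite G
  rw [FDRep.simple_iff_char_is_norm_one] at hV ⊢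
  rw [← hV, FDRep.char_tensor]
  refine Finset.sum_congr rfl fun g _ => ?_
  rw [Pi.mul_apply, Pi.mul_apply, mul_mul_mul_comm, character_repOfUnitsHom,
    character_repOfUnitsHom, ← Units.val_mul, ← map_mul, mul_inv_cancel, map_one, Units.val_one,
    one_mul]

end Characters

section IrreducibleCharacters

open CategoryTheory

variable {ρ σ : G → ℂ}

theorem IsIrrChar.mem_classFunSubmodule (hρ : IsIrrChar G ρ) : ρ ∈ classFunSubmodule G := by
  obtain ⟨V, -, rfl⟩ := hρ
  exact FDRep.char_conj V

theorem IsIrrChar.charInner_self [Fintype G] (hρ : IsIrrChar G ρ) : charInner ℂ ρ ρ = 1 := by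
  obtain ⟨V, hV, rfl⟩ := hρ
  rw [charInner_apply, (FDRep.simple_iff_char_is_norm_one V).1 hV, inv_mul_cancel₀ (NeZero.ne _)]

theorem IsIrrChar.charInner_eq_zero [Fintype G] (hρ : IsIrrChar G ρ) (hσ : IsIrrChar G σ)
    (h : ρ ≠ σ) : charInner ℂ ρ σ = 0 := by
  obtain ⟨V, hV, rfl⟩ := hρ
  obtain ⟨W, hW, rfl⟩ := hσ
  have := invertibleOfNonzero (NeZero.ne (Nat.card G : ℂ))
  rw [charInner_apply, FDRep.char_orthonormal, if_neg fun ⟨i⟩ => h (FDRep.char_iso i)]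

variable (G) in
theorem linearIndependent_isIrrChar [Finite G] :
    LinearIndependent ℂ (Subtype.val : {ρ : G → ℂ // IsIrrChar G ρ} → G → ℂ) :=
  have := Fintype.ofFinite G
  .of_pairwise_dual_eq_zero_one _ (fun ρ => charInner ℂ ρ.1)
    (fun ρ σ h => ρ.2.charInner_eq_zero σ.2 (Subtype.coe_injective.ne h))
    (fun ρ => ρ.2.charInner_self)

variable (G) in
theorem span_isIrrChar [Finite G] :
    Submodule.span ℂ {ρ : G → ℂ | IsIrrChar G ρ} = classFunSubmodule G := by
  have := Fintype.ofFinite G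
  have := (linearIndependent_isIrrChar G).finite
  have := Fintype.ofFinite {ρ : G → ℂ // IsIrrChar G ρ}
  have hle : Submodule.span ℂ {ρ : G → ℂ | IsIrrChar G ρ} ≤ classFunSubmodule G :=
    Submodule.span_le.2 fun ρ hρ => hρ.mem_classFunSubmodule
  refine hle.antisymm fun f hf => ?_
  let p : G → ℂ := ∑ ρ : {ρ : G → ℂ // IsIrrChar G ρ}, charInner ℂ ρ.1 f • ρ.1
  have hp : p ∈ Submodule.span ℂ {ρ : G → ℂ | IsIrrChar G ρ} :=
    Submodule.sum_mem _ fun ρ _ => Submodule.smul_mem _ _ (Submodule.subset_span ρ.2)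
  have hinner (σ : G → ℂ) (hσ : IsIrrChar G σ) : charInner ℂ σ p = charInner ℂ σ f := by
    rw [map_sum, Finset.sum_eq_single_of_mem ⟨σ, hσ⟩ (Finset.mem_univ _)]
    · rw [map_smul, hσ.charInner_self, smul_eq_mul, mul_one]
    · intro ρ _ hne
      rw [map_smul, hσ.charInner_eq_zero ρ.2 fun h => hne (Subtype.ext h.symm), smul_zero]
  have hfp : f - p = 0 :=
    eq_zero_of_forall_simple_charInner_eq_zero (sub_mem hf (hle hp)) fun V hV => by
      rw [map_sub, hinner _ ⟨V, hV, rfl⟩, sub_self]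
  exact sub_eq_zero.1 hfp ▸ hp

end IrreducibleCharacters

section Twisting

variable (N : Subgroup G) [N.Normal]

/-- Twisting by `Q̂` as an action on all functions `G → ℂ`, so that `qhatOrbit N` consists of its
orbits. -/
instance charMulAction : MulAction ((G ⧸ N) →* ℂˣ) (G → ℂ) where
  smul := charMul N
  one_smul _ := funext fun _ => one_mul _
  mul_smul _ _ _ := funext fun _ => mul_assoc _ _ _

theorem charMul_smul_apply (χ : (G ⧸ N) →* ℂˣ) (ρ : G → ℂ) (g : G) :
    (χ • ρ) g = χ (g : G ⧸ N) * ρ g := rfl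

theorem qhatOrbit_eq_orbit (ρ : G → ℂ) :
    qhatOrbit N ρ = MulAction.orbit ((G ⧸ N) →* ℂˣ) ρ :=
  Set.ext fun _ => exists_congr fun _ => eq_comm

theorem mem_qhatOrbit_self (ρ : G → ℂ) : ρ ∈ qhatOrbit N ρ :=
  qhatOrbit_eq_orbit N ρ ▸ MulAction.mem_orbit_self ρ

variable {N}

theorem unitsHom_apply_eq_one_of_smul_eq_self {ρ : G → ℂ} {χ : (G ⧸ N) →* ℂˣ}
    (hχ : χ • ρ = ρ) {g : G} (hg : ρ g ≠ 0) : χ (g : G ⧸ N) = 1 :=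
  Units.val_eq_one.1 <| (mul_eq_right₀ hg).1 (congrFun hχ g)

theorem qhatOrbit_eq_iff {ρ σ : G → ℂ} : qhatOrbit N ρ = qhatOrbit N σ ↔ ρ ∈ qhatOrbit N σ := by
  simp only [qhatOrbit_eq_orbit, MulAction.orbit_eq_iff]

theorem IsIrrChar.smul [Finite G] {ρ : G → ℂ} (hρ : IsIrrChar G ρ) (χ : (G ⧸ N) →* ℂˣ) :
    IsIrrChar G (χ • ρ) := by
  obtain ⟨V, hV, rfl⟩ := hρ
  refine ⟨_, simple_repOfUnitsHom_tensor (χ.comp (QuotientGroup.mk' N)) V, ?_⟩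
  funext g
  rw [FDRep.char_tensor, Pi.mul_apply, character_repOfUnitsHom]
  rfl

theorem qhatOrbit_mem_Rset [Finite G] {q : G} {ρ : G → ℂ} :
    qhatOrbit N ρ ∈ Rset N q ↔ IsIrrChar G ρ ∧ ∃ g ∈ coset N q, ρ g ≠ 0 := by
  constructor
  · rintro ⟨⟨σ, hσ, hρσ⟩, _, ⟨χ, rfl⟩, g, hg, hne⟩
    obtain ⟨ψ, rfl⟩ := qhatOrbit_eq_iff.1 hρσ
    exact ⟨hσ.smul ψ, g, hg, right_ne_zero_of_mul hne⟩
  · rintro ⟨hρ, hne⟩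
    exact ⟨⟨ρ, hρ, rfl⟩, ρ, mem_qhatOrbit_self N ρ, hne⟩

end Twisting

section Duality

theorem conj_unitsHom_apply {A : Type*} [Group A] [Finite A] (χ : A →* ℂˣ) (a : A) :
    (starRingEnd ℂ) (χ a : ℂ) = χ a⁻¹ := by
  have hroot : χ a ∈ rootsOfUnity (Nat.card A) ℂ := by
    rw [mem_rootsOfUnity, ← map_pow, pow_card_eq_one', map_one]
  rw [Complex.conj_rootsOfUnity hroot, map_inv]

theorem sum_unitsHom_apply {A R : Type*} [CommGroup A] [Finite A] [DecidableEq A] [CommRing R]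
    [IsDomain R] [HasEnoughRootsOfUnity R (Monoid.exponent A)] [Fintype (A →* Rˣ)] (a : A) :
    ∑ χ : A →* Rˣ, (χ a : R) = if a = 1 then (Fintype.card (A →* Rˣ) : R) else 0 := by
  classical
  -- Evaluation at `a` is itself a homomorphism on the dual group, trivial only for `a = 1`.
  let eval : (A →* Rˣ) →* R := (Units.coeHom R).comp (MonoidHom.eval a)
  have heval : eval = 1 ↔ a = 1 := by
    rw [← CommGroup.forall_apply_eq_apply_iff A (M := R), DFunLike.ext_iff]
    simp only [eval, MonoidHom.comp_apply, MonoidHom.eval_apply_apply, Units.coeHom_apply,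
      MonoidHom.one_apply, Units.val_eq_one, map_one]
  calc ∑ χ : A →* Rˣ, (χ a : R)
      = ((if eval = 1 then Fintype.card (A →* Rˣ) else 0 : ℕ) : R) := sum_hom_units eval
    _ = if a = 1 then (Fintype.card (A →* Rˣ) : R) else 0 := by
        rw [if_congr heval rfl rfl, Nat.cast_ite, Nat.cast_zero]

end Duality

section CosetProjection

open scoped IsMulCommutative

variable (N : Subgroup G) [N.Normal] (q : G)

theorem piQ_apply [N.FiniteIndex] [Fintype ((G ⧸ N) →* ℂˣ)] (x : G ⧸ N) (g : G) :
    piQ N x g = (Fintype.card ((G ⧸ N) →* ℂˣ) : ℂ)⁻¹ *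
      ∑ χ : (G ⧸ N) →* ℂˣ, (χ (x⁻¹ * g) : ℂ) := by
  simp only [piQ, conj_unitsHom_apply, finsum_eq_sum_of_fintype, map_mul, Units.val_mul,
    Nat.card_eq_fintype_card]

theorem piQ_mul [N.FiniteIndex] [Fintype ((G ⧸ N) →* ℂˣ)] (x : G ⧸ N) (ρ : G → ℂ) :
    piQ N x * ρ = (Fintype.card ((G ⧸ N) →* ℂˣ) : ℂ)⁻¹ •
      ∑ χ : (G ⧸ N) →* ℂˣ, (χ x⁻¹ : ℂ) • (χ • ρ) := by
  funext g
  simp only [Pi.mul_apply, piQ_apply, map_mul, Units.val_mul, Pi.smul_apply, Finset.sum_apply,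
    charMul_smul_apply, smul_eq_mul, mul_assoc, Finset.sum_mul]

theorem piQ_eq_indicator [N.FiniteIndex] [IsMulCommutative (G ⧸ N)] :
    piQ N (q : G ⧸ N) = (coset N q).indicator 1 := by
  classical
  have := Fintype.ofFinite ((G ⧸ N) →* ℂˣ)
  funext g
  rw [piQ_apply, sum_unitsHom_apply]
  by_cases hg : g ∈ coset N q
  · have hqg : (q : G ⧸ N)⁻¹ * g = 1 := inv_mul_eq_one.2 (Eq.symm hg)
    rw [if_pos hqg, Set.indicator_of_mem hg,
      inv_mul_cancel₀ (Nat.cast_ne_zero.2 Fintype.card_ne_zero), Pi.one_apply]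
  · have hqg : (q : G ⧸ N)⁻¹ * g ≠ 1 := fun h => hg (inv_mul_eq_one.1 h).symm
    rw [if_neg hqg, Set.indicator_of_notMem hg, mul_zero]

theorem conj_mem_coset_iff [IsMulCommutative (G ⧸ N)] (g h : G) :
    h * g * h⁻¹ ∈ coset N q ↔ g ∈ coset N q := by
  have : ((h * g * h⁻¹ : G) : G ⧸ N) = g := by
    rw [QuotientGroup.mk_mul, QuotientGroup.mk_mul, mul_comm (h : G ⧸ N), QuotientGroup.mk_inv,
      mul_inv_cancel_right]
  simp only [coset, Set.mem_ofPred_eq, this]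

theorem map_mulLeft_piQ_classFunSubmodule [N.FiniteIndex] [IsMulCommutative (G ⧸ N)] :
    (classFunSubmodule G).map (LinearMap.mulLeft ℂ (piQ N q)) = cosetClassFun N q := by
  rw [piQ_eq_indicator]
  ext f
  constructor
  · rintro ⟨f, hf, rfl⟩
    refine ⟨fun g h => ?_, fun g hg => ?_⟩
    · exact congrArg₂ (· * ·)
        (Set.indicator_const_eq_indicator_const (conj_mem_coset_iff N q g h)) (hf g h)
    · simp [hg]
  · rintro ⟨hf, hvanish⟩
    refine ⟨f, hf, funext fun g => ?_⟩
    by_cases hg : g ∈ coset N q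
    · simp [hg]
    · simp [hg, hvanish]

variable {N q}

theorem piQ_mul_smul [N.FiniteIndex] [IsMulCommutative (G ⧸ N)] (χ : (G ⧸ N) →* ℂˣ) (ρ : G → ℂ) :
    piQ N q * (χ • ρ) = (χ q : ℂ) • (piQ N q * ρ) := by
  rw [piQ_eq_indicator]
  funext g
  by_cases hg : g ∈ coset N q
  · have : (g : G ⧸ N) = q := hg
    simp [hg, charMul_smul_apply, this]
  · simp [hg]

theorem piQ_mul_eq_zero [Finite G] [IsMulCommutative (G ⧸ N)] {ρ : G → ℂ} (hρ : IsIrrChar G ρ)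
    (h : qhatOrbit N ρ ∉ Rset N q) : piQ N q * ρ = 0 := by
  rw [piQ_eq_indicator]
  funext g
  by_cases hg : g ∈ coset N q
  · have hρg : ρ g = 0 := by
      by_contra hne
      exact h (qhatOrbit_mem_Rset.2 ⟨hρ, g, hg, hne⟩)
    simp [hρg]
  · simp [hg]

end CosetProjection

section Orthogonality

variable [Fintype G] {N : Subgroup G} [N.Normal] {ρ σ : G → ℂ}

theorem charInner_piQ_mul_eq_zero (x : G ⧸ N) (hρ : IsIrrChar G ρ) (hσ : IsIrrChar G σ)
    (h : qhatOrbit N σ ≠ qhatOrbit N ρ) : charInner ℂ σ (piQ N x * ρ) = 0 := by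
  have := Fintype.ofFinite ((G ⧸ N) →* ℂˣ)
  rw [piQ_mul, map_smul, map_sum, Finset.sum_eq_zero, smul_zero]
  intro χ _
  rw [map_smul, hσ.charInner_eq_zero (hρ.smul χ), smul_zero]
  exact fun hσρ => h (qhatOrbit_eq_iff.2 ⟨χ, hσρ⟩)

theorem charInner_smul_self (hρ : IsIrrChar G ρ) (χ : (G ⧸ N) →* ℂˣ) [Decidable (χ • ρ = ρ)] :
    charInner ℂ ρ (χ • ρ) = if χ • ρ = ρ then 1 else 0 := by
  split_ifs with hχ
  · rw [hχ, hρ.charInner_self]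
  · exact hρ.charInner_eq_zero (hρ.smul χ) (Ne.symm hχ)

theorem charInner_piQ_mul_self {q : G} (hρ : IsIrrChar G ρ) (hne : ∃ g ∈ coset N q, ρ g ≠ 0) :
    charInner ℂ ρ (piQ N q * ρ) = ((qhatOrbit N ρ).ncard : ℂ)⁻¹ := by
  classical
  have := Fintype.ofFinite ((G ⧸ N) →* ℂˣ)
  obtain ⟨g, hg, hρg⟩ := hne
  have hterm (χ : (G ⧸ N) →* ℂˣ) :
      charInner ℂ ρ ((χ (q : G ⧸ N)⁻¹ : ℂ) • (χ • ρ)) = if χ • ρ = ρ then 1 else 0 := by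
    rw [map_smul, charInner_smul_self hρ]
    split_ifs with hχ
    · have hχq : χ (q : G ⧸ N) = 1 :=
        (congrArg χ hg).symm.trans (unitsHom_apply_eq_one_of_smul_eq_self hχ hρg)
      rw [map_inv, hχq, inv_one, Units.val_one, one_smul]
    · rw [smul_zero]
  let S : Subgroup ((G ⧸ N) →* ℂˣ) := MulAction.stabilizer _ ρ
  have hS : (Nat.card S : ℂ) * (qhatOrbit N ρ).ncard = Fintype.card ((G ⧸ N) →* ℂˣ) := by
    rw [qhatOrbit_eq_orbit, ← MulAction.index_stabilizer, ← Nat.cast_mul, S.card_mul_index,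
      Nat.card_eq_fintype_card]
  calc charInner ℂ ρ (piQ N q * ρ)
      = (Fintype.card ((G ⧸ N) →* ℂˣ) : ℂ)⁻¹ *
          ∑ χ : (G ⧸ N) →* ℂˣ, if χ • ρ = ρ then 1 else 0 := by
        simp only [piQ_mul, map_smul _ (Fintype.card _ : ℂ)⁻¹, map_sum, hterm, smul_eq_mul]
    _ = (Fintype.card ((G ⧸ N) →* ℂˣ) : ℂ)⁻¹ * Nat.card S := by
        rw [Finset.sum_boole, ← Fintype.card_subtype, Nat.card_eq_fintype_card]
        rfl
    _ = ((qhatOrbit N ρ).ncard : ℂ)⁻¹ := by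
        rw [← hS, mul_inv_rev, inv_mul_cancel_right₀ (NeZero.ne _)]

end Orthogonality

section Basis

variable (N : Subgroup G) [N.Normal] (q : G)

/-- The class function `√(#[ρ]) · (π_q ⊗ ρ)`; the factor makes its pairing with
`√(#[ρ]) · ρ` equal to `1`. -/
noncomputable def cosetCharacter (ρ : G → ℂ) : G → ℂ :=
  (√(qhatOrbit N ρ).ncard : ℂ) • (piQ N q * ρ)

theorem ncard_qhatOrbit_ne_zero [N.FiniteIndex] (ρ : G → ℂ) : (qhatOrbit N ρ).ncard ≠ 0 := by
  rw [qhatOrbit_eq_orbit, ← MulAction.index_stabilizer]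
  exact Subgroup.FiniteIndex.index_ne_zero

variable {N q} {U : Set (G → ℂ)}

theorem linearIndependent_cosetCharacter [Finite G]
    (hmaps : Set.MapsTo (qhatOrbit N) U (Rset N q)) (hinj : Set.InjOn (qhatOrbit N) U) :
    LinearIndependent ℂ fun ρ : U => cosetCharacter N q ρ := by
  have := Fintype.ofFinite G
  refine .of_pairwise_dual_eq_zero_one _
    (fun ρ : U => (√(qhatOrbit N ρ.1).ncard : ℂ) • charInner ℂ ρ.1) (fun ρ σ h => ?_)
    fun ρ => ?_
  · obtain ⟨hρ, -⟩ := qhatOrbit_mem_Rset.1 (hmaps ρ.2)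
    obtain ⟨hσ, -⟩ := qhatOrbit_mem_Rset.1 (hmaps σ.2)
    rw [LinearMap.smul_apply, cosetCharacter, map_smul,
      charInner_piQ_mul_eq_zero _ hσ hρ fun hρσ => h (Subtype.ext (hinj ρ.2 σ.2 hρσ)),
      smul_zero, smul_zero]
  · obtain ⟨hρ, hne⟩ := qhatOrbit_mem_Rset.1 (hmaps ρ.2)
    have hsqrt : (√(qhatOrbit N ρ.1).ncard : ℂ) * √(qhatOrbit N ρ.1).ncard =
        (qhatOrbit N ρ.1).ncard := by
      rw [← Complex.ofReal_mul, Real.mul_self_sqrt (Nat.cast_nonneg _), Complex.ofReal_natCast]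
    rw [LinearMap.smul_apply, cosetCharacter, map_smul, charInner_piQ_mul_self hρ hne,
      smul_eq_mul, smul_eq_mul, ← mul_assoc, hsqrt,
      mul_inv_cancel₀ (Nat.cast_ne_zero.2 (ncard_qhatOrbit_ne_zero N _))]

theorem span_cosetCharacter [Finite G] [IsMulCommutative (G ⧸ N)]
    (hmaps : Set.MapsTo (qhatOrbit N) U (Rset N q))
    (hsurj : Set.SurjOn (qhatOrbit N) U (Rset N q)) :
    Submodule.span ℂ (Set.range fun ρ : U => cosetCharacter N q ρ) = cosetClassFun N q := by
  refine le_antisymm (Submodule.span_le.2 ?_) ?_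
  · rintro _ ⟨ρ, rfl⟩
    rw [← map_mulLeft_piQ_classFunSubmodule]
    exact Submodule.smul_mem _ _ <| Submodule.mem_map_of_mem
      (qhatOrbit_mem_Rset.1 (hmaps ρ.2)).1.mem_classFunSubmodule
  · rw [← map_mulLeft_piQ_classFunSubmodule, ← span_isIrrChar, Submodule.map_span_le]
    intro ρ hρ
    rw [LinearMap.mulLeft_apply]
    by_cases hmem : qhatOrbit N ρ ∈ Rset N q
    · obtain ⟨σ, hσ, hσρ⟩ := hsurj hmem
      obtain ⟨χ, rfl⟩ := qhatOrbit_eq_iff.1 hσρ.symm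
      have hsqrt : (√(qhatOrbit N σ).ncard : ℂ) ≠ 0 := by
        simpa using ncard_qhatOrbit_ne_zero N σ
      have hpiσ : piQ N q * σ ∈ Submodule.span ℂ (Set.range fun ρ : U => cosetCharacter N q ρ) :=
        (Submodule.smul_mem_iff _ hsqrt).1 (Submodule.subset_span ⟨⟨σ, hσ⟩, rfl⟩)
      exact (piQ_mul_smul χ σ).symm ▸ Submodule.smul_mem _ _ hpiσ
    · rw [piQ_mul_eq_zero hρ hmem]
      exact Submodule.zero_mem _

end Basis

section Dimension

variable (N : Subgroup G) [N.Normal] (q : G)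

theorem mk_mem_Cset_iff [IsMulCommutative (G ⧸ N)] {g : G} :
    ConjClasses.mk g ∈ Cset N q ↔ g ∈ coset N q := by
  refine ⟨fun h => h ConjClasses.mem_carrier_mk, fun hg x hx => ?_⟩
  obtain ⟨c, rfl⟩ := isConj_iff.1 (ConjClasses.mk_eq_mk_iff_isConj.1
    (ConjClasses.mem_carrier_iff_mk_eq.1 hx).symm)
  exact (conj_mem_coset_iff N q g c).2 hg

/-- Extends a function on the conjugacy classes inside `qN` to the class function on `G` that
vanishes outside `qN`. -/
noncomputable def extendCset : (Cset N q → ℂ) →ₗ[ℂ] G → ℂ :=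
  LinearMap.funLeft ℂ ℂ ConjClasses.mk ∘ₗ Function.ExtendByZero.linearMap ℂ Subtype.val

theorem extendCset_injective : Function.Injective (extendCset N q) :=
  (LinearMap.funLeft_injective_of_surjective ℂ ℂ _ ConjClasses.mk_surjective).comp
    (Function.extend_injective Subtype.val_injective (0 : ConjClasses G → ℂ))

variable {N q} in
theorem extendCset_apply_of_mem {g : G} (hg : ConjClasses.mk g ∈ Cset N q) (c : Cset N q → ℂ) :
    extendCset N q c g = c ⟨ConjClasses.mk g, hg⟩ :=
  Subtype.val_injective.extend_apply c 0 ⟨_, hg⟩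

variable {N q} in
theorem extendCset_apply_of_notMem {g : G} (hg : ConjClasses.mk g ∉ Cset N q)
    (c : Cset N q → ℂ) : extendCset N q c g = 0 :=
  Function.extend_apply' c (0 : ConjClasses G → ℂ) _ fun ⟨x, hx⟩ => hg (hx ▸ x.2)

theorem range_extendCset [IsMulCommutative (G ⧸ N)] :
    LinearMap.range (extendCset N q) = cosetClassFun N q := by
  ext f
  constructor
  · rintro ⟨c, rfl⟩
    refine ⟨fun g h => ?_, fun g hg => extendCset_apply_of_notMem (mt (mk_mem_Cset_iff N q).1 hg) c⟩
    have : ConjClasses.mk (h * g * h⁻¹) = ConjClasses.mk g :=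
      ConjClasses.mk_eq_mk_iff_isConj.2 (isConj_iff.2 ⟨h, rfl⟩).symm
    exact congrArg (Function.extend Subtype.val c 0) this
  · rintro ⟨hf, hvanish⟩
    have hconj (a b : G) (hab : IsConj a b) : f a = f b := by
      obtain ⟨h, rfl⟩ := isConj_iff.1 hab
      exact (hf a h).symm
    refine ⟨fun x => Quotient.lift f hconj x.1, funext fun g => ?_⟩
    by_cases hg : ConjClasses.mk g ∈ Cset N q
    · exact extendCset_apply_of_mem hg _
    · rw [extendCset_apply_of_notMem hg, hvanish g (mt (mk_mem_Cset_iff N q).2 hg)]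

theorem finrank_cosetClassFun [Finite G] [IsMulCommutative (G ⧸ N)] :
    Module.finrank ℂ (cosetClassFun N q) = (Cset N q).ncard := by
  have := Fintype.ofFinite (Cset N q)
  rw [← range_extendCset, LinearMap.finrank_range_of_inj (extendCset_injective N q),
    Module.finrank_fintype_fun_eq_card, ← Nat.card_eq_fintype_card, Nat.card_coe_set_eq]

end Dimension

/-- The class functions `√(#[ρ]) · (π_q ⊗ ρ)`, for `ρ` ranging over a set
`Uq` of representatives of the orbits in `R_q`, form a basis of the space of class
functions vanishing outside `qN`; in particular that space has dimension `#R_q = #C_q`. -/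
theorem basis_of_coset_classFun
    (G : Type) [Group G] [Fintype G] (N : Subgroup G) [N.Normal]
    (hQ : ∀ a b : G ⧸ N, a * b = b * a) (q : G)
    (Uq : Set (G → ℂ))
    (hUq1 : ∀ ρ ∈ Uq, IsIrrChar G ρ ∧ qhatOrbit N ρ ∈ Rset N q)
    (hUq2 : ∀ ρ ∈ Uq, ∀ ρ' ∈ Uq, qhatOrbit N ρ = qhatOrbit N ρ' → ρ = ρ')
    (hUq3 : ∀ S ∈ Rset N q, ∃ ρ ∈ Uq, S = qhatOrbit N ρ)
    (F : ↥Uq → G → ℂ)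
    (hF : ∀ ρ : ↥Uq, F ρ = fun g =>
      (Real.sqrt ((qhatOrbit N (ρ : G → ℂ)).ncard : ℝ) : ℂ) *
        (piQ N (q : G ⧸ N) g * (ρ : G → ℂ) g)) :
    (∀ ρ : ↥Uq, F ρ ∈ cosetClassFun N q) ∧
    LinearIndependent ℂ F ∧
    Submodule.span ℂ (Set.range F) = cosetClassFun N q ∧
    Module.finrank ℂ (cosetClassFun N q) = (Rset N q).ncard ∧
    Module.finrank ℂ (cosetClassFun N q) = (Cset N q).ncard := by
  have : IsMulCommutative (G ⧸ N) := ⟨⟨hQ⟩⟩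
  obtain rfl : F = fun ρ : Uq => cosetCharacter N q ρ := funext hF
  have hmaps : Set.MapsTo (qhatOrbit N) Uq (Rset N q) := fun ρ hρ => (hUq1 ρ hρ).2
  have hinj : Set.InjOn (qhatOrbit N) Uq := fun ρ hρ σ hσ => hUq2 ρ hρ σ hσ
  have hsurj : Set.SurjOn (qhatOrbit N) Uq (Rset N q) := fun S hS =>
    (hUq3 S hS).imp fun _ hρ => ⟨hρ.1, hρ.2.symm⟩
  have hli := linearIndependent_cosetCharacter hmaps hinj
  have hspan := span_cosetCharacter hmaps hsurj
  refine ⟨fun ρ => hspan ▸ Submodule.subset_span ⟨ρ, rfl⟩, hli, hspan, ?_,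
    finrank_cosetClassFun N q⟩
  rw [← hspan, Module.finrank_eq_nat_card_basis (Module.Basis.span hli), Nat.card_coe_set_eq,
    ← hinj.ncard_image, Set.BijOn.image_eq ⟨hmaps, hinj, hsurj⟩]
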